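/- Let Ω ⊂ ℝⁿ be a bounded open set and let u ∈ C³(Ω) ∩ C¹(Ω̄) be strictly k-convex with σ_k(D²u) = 1 in Ω. Then the maximum of |Du| over Ω̄ is attained on the boundary: sup_{Ω̄} |Du| = sup_{∂Ω} |Du|. -/

import Mathlib

open Set Metric Filter Topology Bornology
open scoped RealInnerProductSpace

noncomputable section

/-- Euclidean `n`-space. -/
abbrev Euc (n : ℕ) := EuclideanSpace ℝ (Fin n)

/-- The `k`-th elementary symmetric polynomial of a vector `lam ∈ ℝⁿ`. -/
def esymmVec {n : ℕ} (k : ℕ) (lam : Fin n → ℝ) : ℝ :=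
  ∑ S ∈ Finset.powersetCard k (Finset.univ : Finset (Fin n)), ∏ i ∈ S, lam i

/-- `σ_k(A)`: the `k`-th elementary symmetric polynomial of the eigenvalues of a
symmetric matrix `A` (junk value `0` if `A` is not symmetric). -/
noncomputable def sigmaMat {n : ℕ} (k : ℕ) (A : Matrix (Fin n) (Fin n) ℝ) : ℝ := by
  classical exact if h : A.IsHermitian then esymmVec k h.eigenvalues else 0

/-- The eigenvalues of the symmetric matrix `A` lie in the Gårding cone
`Γ_k = {λ : σ_j(λ) > 0, j = 1, …, k}`. -/
def InGardingCone {n : ℕ} (k : ℕ) (A : Matrix (Fin n) (Fin n) ℝ) : Prop :=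
  ∃ h : A.IsHermitian, ∀ j : ℕ, 1 ≤ j → j ≤ k → 0 < esymmVec j h.eigenvalues

/-- The Hessian matrix of `u` at `x`, with derivatives taken within the set `s`. -/
noncomputable def hessianWithin {n : ℕ} (u : Euc n → ℝ) (s : Set (Euc n)) (x : Euc n) :
    Matrix (Fin n) (Fin n) ℝ :=
  fun i j => iteratedFDerivWithin ℝ 2 u s x
    ![EuclideanSpace.single i (1:ℝ), EuclideanSpace.single j (1:ℝ)]

/-- The Hessian matrix `D²u(x)` of `u` at `x`. -/
noncomputable def hessian {n : ℕ} (u : Euc n → ℝ) (x : Euc n) : Matrix (Fin n) (Fin n) ℝ :=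
  fun i j => iteratedFDeriv ℝ 2 u x
    ![EuclideanSpace.single i (1:ℝ), EuclideanSpace.single j (1:ℝ)]

/-- Operator norm of the Hessian matrix of `u` at `x` (derivatives within `s`). -/
noncomputable def hessOpNormWithin {n : ℕ} (u : Euc n → ℝ) (s : Set (Euc n)) (x : Euc n) : ℝ :=
  ‖Matrix.toEuclideanCLM (𝕜 := ℝ) (hessianWithin u s x)‖

/-- A set has smooth boundary: it is the sublevel set of a smooth defining function
with nonvanishing differential on the boundary. -/
def HasSmoothBoundary {n : ℕ} (Ω : Set (Euc n)) : Prop :=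
  ∃ ρ : Euc n → ℝ, ContDiff ℝ (⊤ : ℕ∞) ρ ∧ Ω = {x | ρ x < 0} ∧
    ∀ x ∈ frontier Ω, fderiv ℝ ρ x ≠ 0

/-- `c_{n,k} = (C(n,k))^{1/k}` where `C(n,k)` is the binomial coefficient. -/
noncomputable def cnk (n k : ℕ) : ℝ := (n.choose k : ℝ) ^ ((1:ℝ)/(k:ℝ))

/-- The radially symmetric subsolution `|x - x₀|²/(2c_{n,k}) − ε²/(2c_{n,k}) − M`. -/
noncomputable def underSol {n : ℕ} (k : ℕ) (x₀ : Euc n) (ε M : ℝ) (x : Euc n) : ℝ :=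
  ‖x - x₀‖^2 / (2 * cnk n k) - ε^2 / (2 * cnk n k) - M

/-- The closed ring `Ω̄^ε = closure (Ω₁ \ B̄_ε(x₀))`. -/
def ringSet {n : ℕ} (Ω₁ : Set (Euc n)) (x₀ : Euc n) (ε : ℝ) : Set (Euc n) :=
  closure (Ω₁ \ closedBall x₀ ε)

/-- `u` is a strictly `k`-convex solution of problem (2.1):
`σ_k(D²u) = 1` in `Ω^ε = Ω₁ \ B̄_ε(x₀)`, `u = 0` on `∂Ω₁`, `u = −M` on `∂B_ε(x₀)`,
with `u ∈ C²(Ω̄^ε)`. -/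
def IsSol {n : ℕ} (k : ℕ) (Ω₁ : Set (Euc n)) (x₀ : Euc n) (ε M : ℝ) (u : Euc n → ℝ) : Prop :=
  ContDiffOn ℝ 2 u (ringSet Ω₁ x₀ ε) ∧
  (∀ x ∈ Ω₁ \ closedBall x₀ ε,
      InGardingCone k (hessianWithin u (ringSet Ω₁ x₀ ε) x) ∧
      sigmaMat k (hessianWithin u (ringSet Ω₁ x₀ ε) x) = 1) ∧
  (∀ x ∈ frontier Ω₁, u x = 0) ∧
  (∀ x ∈ sphere x₀ ε, u x = -M)

/-- `ψ` is a strictly `k`-convex solution of problem (2.2):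
`σ_k(D²ψ) = 1` in `Ω₁`, `ψ = 0` on `∂Ω₁`, with `ψ ∈ C^∞(Ω̄₁)`. -/
def IsSol22 {n : ℕ} (k : ℕ) (Ω₁ : Set (Euc n)) (ψ : Euc n → ℝ) : Prop :=
  ContDiffOn ℝ (⊤ : ℕ∞) ψ (closure Ω₁) ∧
  (∀ x ∈ Ω₁, InGardingCone k (hessianWithin ψ (closure Ω₁) x) ∧
      sigmaMat k (hessianWithin ψ (closure Ω₁) x) = 1) ∧
  (∀ x ∈ frontier Ω₁, ψ x = 0)

/-- `u` is a strictly `k`-convex solution of the Dirichlet problem on the convex ring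
`Ω = Ω₁ \ Ω̄₂`: `σ_k(D²u) = 1` in `Ω`, `u = 0` on `∂Ω₁`, `u = −M` on `∂Ω₂`,
with `u ∈ C²(Ω̄)`. -/
def IsSolRing {n : ℕ} (k : ℕ) (Ω₁ Ω₂ : Set (Euc n)) (M : ℝ) (u : Euc n → ℝ) : Prop :=
  ContDiffOn ℝ 2 u (closure (Ω₁ \ closure Ω₂)) ∧
  (∀ x ∈ Ω₁ \ closure Ω₂,
      InGardingCone k (hessianWithin u (closure (Ω₁ \ closure Ω₂)) x) ∧
      sigmaMat k (hessianWithin u (closure (Ω₁ \ closure Ω₂)) x) = 1) ∧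
  (∀ x ∈ frontier Ω₁, u x = 0) ∧
  (∀ x ∈ frontier Ω₂, u x = -M)

/-- The extension `ũ` of `u`, equal to `−M` on the closed ball `B̄_ε(x₀)`. -/
noncomputable def extendBy {n : ℕ} (u : Euc n → ℝ) (x₀ : Euc n) (ε M : ℝ) (x : Euc n) : ℝ := by
  classical exact if x ∈ closedBall x₀ ε then -M else u x

/-- The extension `ũ` of `u`, equal to `−M` on the set `Ω₂`. -/
noncomputable def extendOn {n : ℕ} (u : Euc n → ℝ) (Ω₂ : Set (Euc n)) (M : ℝ) (x : Euc n) : ℝ := by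
  classical exact if x ∈ Ω₂ then -M else u x

/-- The quadratic polynomial with Hessian `A`, linear part `b` and constant term `c`. -/
noncomputable def quadPoly {n : ℕ} (A : Matrix (Fin n) (Fin n) ℝ) (b : Euc n) (c : ℝ)
    (x : Euc n) : ℝ :=
  (∑ i, ∑ j, A i j * x i * x j) / 2 + ⟪b, x⟫ + c

/-!
Bernstein's method. At an interior local maximum `x` of `|Du|`, let `e_i` be an orthonormal frame of
eigenvectors of `D²u(x)` with eigenvalues `λ_i`. The second derivative of `|Du|²` in the direction
`e_i` is nonpositive, that is `λ_i² + D³u(Du, e_i, e_i) ≤ 0`. On the other hand the derivative of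
`σ_k(D²u)` in the direction `Du` is `∑ i, F_i D³u(Du, e_i, e_i)` with
`F_i = ∂σ_k/∂λ_i = σ_{k-1}(λ | i)`, and Newton's inequality gives `F_i > 0` on `Γ_k`. Hence this
derivative is at most `-∑ i, F_i λ_i² < 0`, which is impossible if `σ_k(D²u)` is constant.

So the maximum of the continuous extension of `Du` to `Ω̄` is reached on `∂Ω`. This extension agrees
with the derivative within `Ω̄` wherever the latter is unique, in particular at the boundary points
touched by a ball inside `Ω`, and these are dense in `∂Ω`.
-/

section RealRooted

open Polynomial

theorem splits_derivative {p : ℝ[X]} (hp : p.Splits) : (derivative p).Splits := by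
  rw [splits_iff_card_roots] at hp ⊢
  have hroots := card_roots_le_derivative p
  have hcard := (derivative p).card_roots'
  have hdeg := natDegree_derivative_le p
  rcases Nat.eq_zero_or_pos p.natDegree with hp0 | hp0
  · obtain ⟨c, rfl⟩ := natDegree_eq_zero.mp hp0
    simp
  · omega

theorem splits_iterate_derivative {p : ℝ[X]} (hp : p.Splits) (m : ℕ) :
    (derivative^[m] p).Splits := by
  induction m with
  | zero => exact hp
  | succ m ih =>
    rw [Function.iterate_succ_apply']
    exact splits_derivative ih

variable {F : Type*} [Field F] [LinearOrder F] [IsStrictOrderedRing F]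

-- Laguerre's inequality: passing from `g` to `(X - a) * g` multiplies the discriminant
-- `g' ^ 2 - g * g''` by `(x - a) ^ 2` and adds `g ^ 2`.
theorem eval_mul_eval_derivative_derivative_le_sq {p : F[X]} (hp : p.Splits) (x : F) :
    p.eval x * (derivative (derivative p)).eval x ≤ (derivative p).eval x ^ 2 := by
  have monic_case (s : Multiset F) :
      (s.map (X - C ·)).prod.eval x * (derivative (derivative (s.map (X - C ·)).prod)).eval x ≤
        (derivative (s.map (X - C ·)).prod).eval x ^ 2 := by
    induction s using Multiset.induction_on with
    | empty => simp
    | cons a s ih =>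
      rw [Multiset.map_cons, Multiset.prod_cons]
      generalize (s.map (X - C ·)).prod = g at ih
      simp only [derivative_mul, derivative_sub, derivative_X, derivative_C, derivative_add,
        eval_add, eval_mul, eval_sub, eval_X, eval_C, sub_zero, one_mul]
      linear_combination (x - a) ^ 2 * ih + sq_nonneg (g.eval x)
  rw [hp.eq_prod_roots]
  simp only [derivative_C_mul, eval_mul, eval_C]
  linear_combination p.leadingCoeff ^ 2 * monic_case p.roots

/-- Newton's inequality, without its binomial factors. -/
theorem coeff_mul_coeff_add_two_le_sq {p : ℝ[X]} (hp : p.Splits) (m : ℕ) :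
    p.coeff m * p.coeff (m + 2) ≤ p.coeff (m + 1) ^ 2 := by
  have laguerre := eval_mul_eval_derivative_derivative_le_sq (splits_iterate_derivative hp m) 0
  simp only [← Function.iterate_succ_apply' derivative, ← coeff_zero_eq_eval_zero,
    coeff_iterate_derivative, zero_add, Nat.descFactorial_self, nsmul_eq_mul,
    Nat.factorial_succ, Nat.succ_eq_add_one] at laguerre
  push_cast at laguerre
  have newton : (m + 2) * (p.coeff m * p.coeff (m + 2)) ≤ (m + 1) * p.coeff (m + 1) ^ 2 := by
    have hfact : (0 : ℝ) < (m + 1) * m.factorial ^ 2 := by positivity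
    refine le_of_mul_le_mul_left ?_ hfact
    linear_combination laguerre
  rcases le_total (p.coeff m * p.coeff (m + 2)) 0 with h | h
  · exact h.trans (sq_nonneg _)
  · exact le_of_mul_le_mul_left (by linarith) m.cast_add_one_pos

end RealRooted

section ElementarySymmetric

open Polynomial

theorem esymm_cons_succ {R : Type*} [CommSemiring R] (a : R) (s : Multiset R) (k : ℕ) :
    (a ::ₘ s).esymm (k + 1) = s.esymm (k + 1) + a * s.esymm k := by
  simp [Multiset.esymm, Multiset.powersetCard_cons, Multiset.sum_map_mul_left]

theorem esymm_mul_esymm_add_two_le_sq (s : Multiset ℝ) (m : ℕ) :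
    s.esymm m * s.esymm (m + 2) ≤ s.esymm (m + 1) ^ 2 := by
  rcases lt_or_ge s.card (m + 2) with hlt | hle
  · have hzero : s.esymm (m + 2) = 0 := by
      simp [Multiset.esymm, Multiset.powersetCard_eq_empty _ hlt]
    rw [hzero, mul_zero]
    exact sq_nonneg _
  · obtain ⟨j, hj⟩ := Nat.exists_eq_add_of_le' hle
    have hsplits : (s.map (X + C ·)).prod.Splits := by
      refine Splits.multisetProd fun q hq => ?_
      obtain ⟨a, -, rfl⟩ := Multiset.mem_map.mp hq
      exact Splits.X_add_C a
    have newton := coeff_mul_coeff_add_two_le_sq hsplits j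
    rw [Multiset.prod_X_add_C_coeff s (by omega), Multiset.prod_X_add_C_coeff s (by omega),
      Multiset.prod_X_add_C_coeff s (by omega), show s.card - j = m + 2 by omega,
      show s.card - (j + 2) = m by omega, show s.card - (j + 1) = m + 1 by omega] at newton
    rwa [mul_comm]

-- If `σ_{k+1}(s) ≤ 0 < σ_k(s)`, then positivity of `σ_{k+1}` and `σ_{k+2}` on `a ::ₘ s`
-- contradicts Newton's inequality for `s`.
theorem esymm_pos_of_esymm_cons_pos {a : ℝ} {s : Multiset ℝ} {k : ℕ}
    (h : ∀ j, 1 ≤ j → j ≤ k + 1 → 0 < (a ::ₘ s).esymm j) : 0 < s.esymm k := by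
  induction k with
  | zero => simp [Multiset.esymm]
  | succ k ih =>
    have hk : 0 < s.esymm k := ih fun j h1 hj => h j h1 (by omega)
    have h1 := h (k + 1) (by omega) (by omega)
    have h2 := h (k + 2) (by omega) (by omega)
    rw [esymm_cons_succ] at h1 h2
    by_contra! hneg
    nlinarith [esymm_mul_esymm_add_two_le_sq s k, mul_pos hk h2,
      mul_nonneg (neg_nonneg.mpr hneg) h1.le]

variable {ι R : Type*} [Fintype ι] [DecidableEq ι] [CommSemiring R]

/-- `σ_k(λ | i)`, the `k`-th elementary symmetric polynomial of the entries of `lam` other than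
the `i`-th; it is the partial derivative of `σ_{k+1}` with respect to `λ_i`. -/
def esymmErase (k : ℕ) (lam : ι → R) (i : ι) : R :=
  ((Finset.univ.erase i).val.map lam).esymm k

theorem esymmErase_pos {k : ℕ} {lam : ι → ℝ}
    (h : ∀ j, 1 ≤ j → j ≤ k + 1 → 0 < (Finset.univ.val.map lam).esymm j) (i : ι) :
    0 < esymmErase k lam i := by
  refine esymm_pos_of_esymm_cons_pos (a := lam i) ?_
  rwa [← Multiset.map_cons, Finset.erase_val, Multiset.cons_erase (Finset.mem_univ i)]

theorem esymmErase_eq_sum (k : ℕ) (lam : ι → R) (i : ι) :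
    esymmErase k lam i =
      ∑ S ∈ Finset.univ.powersetCard (k + 1) with i ∈ S, ∏ j ∈ S.erase i, lam j := by
  rw [esymmErase, Finset.esymm_map_val]
  have notMem {T : Finset ι} (hT : T ∈ (Finset.univ.erase i).powersetCard k) : i ∉ T :=
    fun hi => Finset.notMem_erase i _ ((Finset.mem_powersetCard.mp hT).1 hi)
  refine Finset.sum_bij' (fun T _ => insert i T) (fun S _ => S.erase i) ?_ ?_ ?_ ?_ ?_
  · intro T hT
    simp [Finset.card_insert_of_notMem (notMem hT), (Finset.mem_powersetCard.mp hT).2]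
  · intro S hS
    simp only [Finset.mem_filter, Finset.mem_powersetCard_univ] at hS
    simp [Finset.mem_powersetCard, Finset.erase_subset_erase, Finset.card_erase_of_mem hS.2, hS.1]
  · exact fun T hT => Finset.erase_insert (notMem hT)
  · exact fun S hS => Finset.insert_erase (Finset.mem_filter.mp hS).2
  · intro T hT
    rw [Finset.erase_insert (notMem hT)]

end ElementarySymmetric

theorem prod_univ_erase_coe_sort {ι κ : Type*} [DecidableEq ι] [CommMonoid κ] (S : Finset ι)
    (i : S) (d : ι → κ) : ∏ j ∈ Finset.univ.erase i, d j = ∏ j ∈ S.erase i, d j := by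
  refine Finset.prod_nbij Subtype.val ?_ Subtype.val_injective.injOn ?_ fun _ _ => rfl
  · exact fun j hj => Finset.mem_erase.mpr
      ⟨fun h => Finset.ne_of_mem_erase hj (Subtype.ext h), j.2⟩
  · exact fun j hj => ⟨⟨j, Finset.mem_of_mem_erase hj⟩,
      by simpa [Subtype.ext_iff] using Finset.ne_of_mem_erase hj, rfl⟩

section PrincipalMinors

open Matrix

variable {ι R : Type*} [Fintype ι] [DecidableEq ι] [CommRing R]

/-- The sum of the principal `k × k` minors of `M`, a polynomial in the entries of `M` which for
Hermitian matrices is `σ_k(M)`. -/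
def sumPrincipalMinors (k : ℕ) (M : Matrix ι ι R) : R :=
  ∑ S ∈ Finset.univ.powersetCard k,
    (M.submatrix (Subtype.val : S → ι) (Subtype.val : S → ι)).det

theorem sumPrincipalMinors_eq_of_charpoly_eq {M N : Matrix ι ι R} (h : M.charpoly = N.charpoly)
    (k : ℕ) : sumPrincipalMinors k M = sumPrincipalMinors k N := by
  rcases le_or_gt k (Fintype.card ι) with hk | hk
  · have hM := charpoly_coeff_eq_sum_minors M k hk
    rw [h, charpoly_coeff_eq_sum_minors N k hk] at hM
    exact ((isUnit_neg_one.pow k).mul_left_cancel hM).symm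
  · simp [sumPrincipalMinors, Finset.powersetCard_eq_empty.mpr hk]

theorem sumPrincipalMinors_diagonal (k : ℕ) (d : ι → R) :
    sumPrincipalMinors k (diagonal d) = (Finset.univ.val.map d).esymm k := by
  rw [sumPrincipalMinors, Finset.esymm_map_val]
  refine Finset.sum_congr rfl fun S _ => ?_
  rw [submatrix_diagonal _ _ Subtype.val_injective, det_diagonal]
  exact Finset.prod_coe_sort S d

theorem sigmaMat_eq_sumPrincipalMinors {n : ℕ} (k : ℕ) {A : Matrix (Fin n) (Fin n) ℝ}
    (hA : A.IsHermitian) : sigmaMat k A = sumPrincipalMinors k A := by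
  have hcharpoly : A.charpoly = (diagonal hA.eigenvalues).charpoly := by
    rw [hA.charpoly_eq, charpoly_diagonal]
    rfl
  rw [sigmaMat, dif_pos hA, sumPrincipalMinors_eq_of_charpoly_eq hcharpoly,
    sumPrincipalMinors_diagonal, Finset.esymm_map_val, esymmVec]

variable {𝕜 E : Type*} [NontriviallyNormedField 𝕜] [NormedAddCommGroup E] [NormedSpace 𝕜 E]

/-- Jacobi's formula. -/
theorem hasFDerivAt_det {M : E → Matrix ι ι 𝕜} {M' : ι → ι → E →L[𝕜] 𝕜} {x : E}
    (hM : ∀ i j, HasFDerivAt (fun y => M y i j) (M' i j) x) :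
    HasFDerivAt (fun y => (M y).det) (∑ i, ∑ j, (M x).adjugate j i • M' i j) x := by
  let detRow : ContinuousMultilinearMap 𝕜 (fun _ : ι => ι → 𝕜) 𝕜 :=
    ⟨detRowAlternating.toMultilinearMap, continuous_id.matrix_det⟩
  have hrow (i : ι) : HasFDerivAt (fun y => M y i) (ContinuousLinearMap.pi (M' i)) x :=
    hasFDerivAt_pi.mpr (hM i)
  refine (HasFDerivAt.multilinear_comp detRow hrow).congr_fderiv ?_
  ext w
  simp only [_root_.sum_apply, _root_.smul_apply, ContinuousLinearMap.comp_apply]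
  refine Finset.sum_congr rfl fun i _ => ?_
  calc ((M x).updateRow i fun j => M' i j w).det
      = ((M x).adjugateᵀ *ᵥ fun j => M' i j w) i := by
        rw [← cramer_transpose_apply, cramer_eq_adjugate_mulVec, adjugate_transpose]
    _ = ∑ j, (M x).adjugate j i • M' i j w := rfl

theorem hasFDerivAt_det_of_diagonal {M : E → Matrix ι ι 𝕜} {M' : ι → ι → E →L[𝕜] 𝕜} {x : E}
    {d : ι → 𝕜} (hM : ∀ i j, HasFDerivAt (fun y => M y i j) (M' i j) x) (hx : M x = diagonal d) :
    HasFDerivAt (fun y => (M y).det) (∑ i, (∏ j ∈ Finset.univ.erase i, d j) • M' i i) x := by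
  refine (hasFDerivAt_det hM).congr_fderiv (Finset.sum_congr rfl fun i _ => ?_)
  rw [hx, adjugate_diagonal, Finset.sum_eq_single_of_mem i (Finset.mem_univ i), diagonal_apply_eq]
  intro j _ hji
  rw [diagonal_apply_ne _ hji]
  exact zero_smul 𝕜 (M' i j)

theorem hasFDerivAt_sumPrincipalMinors_of_diagonal {M : E → Matrix ι ι 𝕜}
    {M' : ι → ι → E →L[𝕜] 𝕜} {x : E} {d : ι → 𝕜}
    (hM : ∀ i j, HasFDerivAt (fun y => M y i j) (M' i j) x) (hx : M x = diagonal d) (k : ℕ) :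
    HasFDerivAt (fun y => sumPrincipalMinors (k + 1) (M y))
      (∑ i, esymmErase k d i • M' i i) x := by
  have hminor (S : Finset ι) :
      HasFDerivAt (fun y => ((M y).submatrix (Subtype.val : S → ι) Subtype.val).det)
        (∑ i ∈ S, (∏ j ∈ S.erase i, d j) • M' i i) x := by
    have hdiag : (M x).submatrix (Subtype.val : S → ι) Subtype.val = diagonal fun i : S => d i := by
      rw [hx, submatrix_diagonal _ _ Subtype.val_injective]
      rfl
    refine (hasFDerivAt_det_of_diagonal (M := fun y => (M y).submatrix Subtype.val Subtype.val)
      (M' := fun i j : S => M' i j) (fun i j => hM i j) hdiag).congr_fderiv ?_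
    rw [← Finset.sum_coe_sort S]
    exact Finset.sum_congr rfl fun i _ => by rw [prod_univ_erase_coe_sort]
  refine (HasFDerivAt.fun_sum fun S _ => hminor S).congr_fderiv ?_
  rw [Finset.sum_comm' (t' := Finset.univ)
    (s' := fun i => {S ∈ Finset.univ.powersetCard (k + 1) | i ∈ S}) (by simp [and_comm])]
  refine Finset.sum_congr rfl fun i _ => ?_
  rw [esymmErase_eq_sum]
  exact (Finset.sum_smul (R := 𝕜) (M := E →L[𝕜] 𝕜)).symm

end PrincipalMinors

section LocalMax

theorem deriv_deriv_nonpos_of_isLocalMax {g : ℝ → ℝ} {t : ℝ} (hmax : IsLocalMax g t)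
    (hg : ContinuousAt g t) : deriv (deriv g) t ≤ 0 := by
  by_contra! hpos
  have hmin : IsLocalMin g t := isLocalMin_of_deriv_deriv_pos hpos hmax.deriv_eq_zero hg
  have hconst : g =ᶠ[𝓝 t] fun _ => g t := by
    filter_upwards [hmax, hmin] with s hle hge using le_antisymm hle hge
  simp [hconst.deriv.deriv_eq] at hpos

theorem hasFDerivAt_fderiv {𝕜 E F : Type*} [NontriviallyNormedField 𝕜] [NormedAddCommGroup E]
    [NormedSpace 𝕜 E] [NormedAddCommGroup F] [NormedSpace 𝕜 F] {f : E → F} {x : E}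
    (hf : ContDiffAt 𝕜 2 f x) : HasFDerivAt (fderiv 𝕜 f) (fderiv 𝕜 (fderiv 𝕜 f) x) x :=
  ((hf.fderiv_right (m := 1) (by norm_num)).differentiableAt (by simp)).hasFDerivAt

variable {E F : Type*} [NormedAddCommGroup E] [NormedSpace ℝ E]
  [NormedAddCommGroup F] [InnerProductSpace ℝ F]

theorem norm_sq_deriv_add_inner_nonpos_of_isLocalMax {c : ℝ → F} {t : ℝ}
    (hc : ContDiffAt ℝ 2 c t) (hmax : IsLocalMax (‖c ·‖) t) :
    ‖deriv c t‖ ^ 2 + ⟪c t, deriv (deriv c) t⟫ ≤ 0 := by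
  have hderiv : deriv (‖c ·‖ ^ 2) =ᶠ[𝓝 t] fun s => 2 * ⟪c s, deriv c s⟫ := by
    filter_upwards [hc.eventually (by simp)] with s hs
    exact (hs.differentiableAt (by simp)).hasDerivAt.norm_sq.deriv
  have hc' : DifferentiableAt ℝ (deriv c) t :=
    (hasFDerivAt_fderiv hc).differentiableAt.clm_apply (differentiableAt_const 1)
  have hderiv2 :
      deriv (deriv (‖c ·‖ ^ 2)) t = 2 * (⟪c t, deriv (deriv c) t⟫ + ‖deriv c t‖ ^ 2) := by
    rw [hderiv.deriv_eq, ← real_inner_self_eq_norm_sq]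
    exact (((hc.differentiableAt (by simp)).hasDerivAt.inner ℝ hc'.hasDerivAt).const_mul 2).deriv
  have hmax_sq : IsLocalMax (‖c ·‖ ^ 2) t :=
    hmax.mono fun s hs => pow_le_pow_left₀ (norm_nonneg _) hs 2
  have := deriv_deriv_nonpos_of_isLocalMax hmax_sq (hc.continuousAt.norm.pow 2)
  linarith

theorem norm_sq_fderiv_add_inner_nonpos_of_isLocalMax {G : E → F} {x : E}
    (hG : ContDiffAt ℝ 2 G x) (hmax : IsLocalMax (‖G ·‖) x) (v : E) :
    ‖fderiv ℝ G x v‖ ^ 2 + ⟪G x, fderiv ℝ (fderiv ℝ G) x v v⟫ ≤ 0 := by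
  let line : ℝ → E := fun s => x + s • v
  have hline (s : ℝ) : HasDerivAt line v s := by
    simpa [line] using ((hasDerivAt_id s).smul_const v).const_add x
  have hline0 : line 0 = x := by simp [line]
  have htends : Tendsto line (𝓝 0) (𝓝 x) := hline0 ▸ (hline 0).continuousAt
  have hderiv : deriv (G ∘ line) =ᶠ[𝓝 0] fun s => fderiv ℝ G (line s) v := by
    filter_upwards [htends.eventually (hG.eventually (by simp))] with s hs
    exact ((hs.differentiableAt (by simp)).hasFDerivAt.comp_hasDerivAt s (hline s)).deriv
  have hG' : HasFDerivAt (fderiv ℝ G) (fderiv ℝ (fderiv ℝ G) x) (line 0) := by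
    rw [hline0]
    exact hasFDerivAt_fderiv hG
  have hderiv2 : deriv (deriv (G ∘ line)) 0 = fderiv ℝ (fderiv ℝ G) x v v := by
    rw [hderiv.deriv_eq]
    simpa using ((hG'.comp_hasDerivAt 0 (hline 0)).clm_apply (hasDerivAt_const 0 v)).deriv
  have hcomp : ContDiffAt ℝ 2 (G ∘ line) 0 :=
    ContDiffAt.comp 0 (hline0 ▸ hG) (by fun_prop)
  have hmaxcomp : IsLocalMax (‖(G ∘ line) ·‖) 0 :=
    (htends.eventually hmax).mono fun s hs => by simpa [hline0] using hs
  simpa [hderiv.self_of_nhds, hderiv2, hline0] using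
    norm_sq_deriv_add_inner_nonpos_of_isLocalMax hcomp hmaxcomp

end LocalMax

section Gradient

variable {E : Type*} [NormedAddCommGroup E] [InnerProductSpace ℝ E] [CompleteSpace E]
  {u : E → ℝ} {x : E}

theorem contDiffAt_gradient {m n : WithTop ℕ∞} (hu : ContDiffAt ℝ n u x) (hmn : m + 1 ≤ n) :
    ContDiffAt ℝ m (gradient u) x :=
  (InnerProductSpace.toDual ℝ E).symm.toContinuousLinearEquiv.contDiff.contDiffAt.comp x
    (hu.fderiv_right hmn)

theorem inner_fderiv_gradient (hu : ContDiffAt ℝ 2 u x) (v w : E) :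
    ⟪fderiv ℝ (gradient u) x v, w⟫ = fderiv ℝ (fderiv ℝ u) x v w := by
  have hgrad : HasFDerivAt (gradient u) (fderiv ℝ (gradient u) x) x :=
    ((contDiffAt_gradient hu (m := 1) (by norm_num)).differentiableAt (by simp)).hasFDerivAt
  have hleft := hgrad.inner ℝ (hasFDerivAt_const w x)
  have hright := (hasFDerivAt_fderiv hu).clm_apply (hasFDerivAt_const w x)
  simp only [inner_gradient_left] at hleft
  simpa using DFunLike.congr_fun (hleft.unique hright) v

theorem inner_fderiv_gradient_comm (hu : ContDiffAt ℝ 2 u x) (v w : E) :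
    ⟪fderiv ℝ (gradient u) x v, w⟫ = ⟪fderiv ℝ (gradient u) x w, v⟫ := by
  rw [inner_fderiv_gradient hu, inner_fderiv_gradient hu]
  exact (hu.isSymmSndFDerivAt (by simp)).eq v w

theorem inner_fderiv_fderiv_gradient_comm (hu : ContDiffAt ℝ 3 u x) (v w z : E) :
    ⟪fderiv ℝ (fderiv ℝ (gradient u)) x v w, z⟫ =
      ⟪fderiv ℝ (fderiv ℝ (gradient u)) x v z, w⟫ := by
  have hT := hasFDerivAt_fderiv (contDiffAt_gradient hu (m := 2) (by norm_num))
  have hinner (a b : E) :=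
    (hT.clm_apply (hasFDerivAt_const a x)).inner ℝ (hasFDerivAt_const b x)
  have hcomm : (fun y => ⟪fderiv ℝ (gradient u) y z, w⟫) =ᶠ[𝓝 x]
      fun y => ⟪fderiv ℝ (gradient u) y w, z⟫ := by
    filter_upwards [hu.eventually (by simp)] with y hy
    exact inner_fderiv_gradient_comm (hy.of_le (by norm_num)) z w
  simpa using
    DFunLike.congr_fun ((hinner w z).unique ((hinner z w).congr_of_eventuallyEq hcomm.symm)) v

theorem norm_sq_fderiv_gradient_add_inner_nonpos_of_isLocalMax (hu : ContDiffAt ℝ 3 u x)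
    (hmax : IsLocalMax (‖gradient u ·‖) x) (v : E) :
    ‖fderiv ℝ (gradient u) x v‖ ^ 2 +
      ⟪v, fderiv ℝ (fderiv ℝ (gradient u)) x (gradient u x) v⟫ ≤ 0 := by
  have hG : ContDiffAt ℝ 2 (gradient u) x := contDiffAt_gradient hu (by norm_num)
  have hsymm := (hG.isSymmSndFDerivAt (by simp)).eq (gradient u x) v
  rw [real_inner_comm, hsymm, inner_fderiv_fderiv_gradient_comm hu, real_inner_comm]
  exact norm_sq_fderiv_add_inner_nonpos_of_isLocalMax hG hmax v

end Gradient

section Hessian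

open Matrix

theorem charpoly_toMatrixOrthonormal_toEuclideanLin {𝕜 ι : Type*} [RCLike 𝕜] [Fintype ι]
    [DecidableEq ι] (A : Matrix ι ι 𝕜) (b : OrthonormalBasis ι 𝕜 (EuclideanSpace 𝕜 ι)) :
    (LinearMap.toMatrixOrthonormal b (toEuclideanLin A)).charpoly = A.charpoly := by
  rw [toEuclideanLin, toLpLin_eq_toLin, ← charpoly_toLin A (PiLp.basisFun 2 𝕜 ι)]
  exact LinearMap.charpoly_toMatrix _ b.toBasis

theorem toEuclideanCLM_eigenvectorBasis {𝕜 ι : Type*} [RCLike 𝕜] [Fintype ι]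
    [DecidableEq ι] {A : Matrix ι ι 𝕜} (hA : A.IsHermitian) (i : ι) :
    toEuclideanCLM (𝕜 := 𝕜) A (hA.eigenvectorBasis i) =
      (hA.eigenvalues i : 𝕜) • hA.eigenvectorBasis i := by
  ext j
  simpa [RCLike.real_smul_eq_coe_mul] using congr_fun (hA.mulVec_eigenvectorBasis i) j

theorem toMatrixOrthonormal_eigenvectorBasis {𝕜 ι : Type*} [RCLike 𝕜] [Fintype ι]
    [DecidableEq ι] {A : Matrix ι ι 𝕜} (hA : A.IsHermitian) :
    LinearMap.toMatrixOrthonormal hA.eigenvectorBasis (toEuclideanLin A) =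
      diagonal fun i => (hA.eigenvalues i : 𝕜) := by
  ext i j
  have horth := orthonormal_iff_ite.mp hA.eigenvectorBasis.orthonormal i j
  rw [LinearMap.toMatrixOrthonormal_apply_apply, ← coe_toEuclideanCLM_eq_toEuclideanLin,
    ContinuousLinearMap.coe_coe, toEuclideanCLM_eigenvectorBasis, inner_smul_right, horth]
  rcases eq_or_ne i j with rfl | hij <;> simp [*]

variable {n : ℕ}

-- In the frame of eigenvectors of `A x`, kept fixed as the point varies, `A x` is diagonal.
theorem hasFDerivAt_sigmaMat {E : Type*} [NormedAddCommGroup E] [NormedSpace ℝ E]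
    {A : E → Matrix (Fin n) (Fin n) ℝ} {T : E →L[ℝ] Euc n →L[ℝ] Euc n} {x : E}
    (hT : HasFDerivAt (fun y => toEuclideanCLM (𝕜 := ℝ) (A y)) T x)
    (hA : ∀ᶠ y in 𝓝 x, (A y).IsHermitian) (k : ℕ) :
    HasFDerivAt (fun y => sigmaMat (k + 1) (A y))
      (∑ i, esymmErase k hA.self_of_nhds.eigenvalues i •
        (innerSL ℝ (hA.self_of_nhds.eigenvectorBasis i) ∘L
          T.flip (hA.self_of_nhds.eigenvectorBasis i))) x := by
  set b := hA.self_of_nhds.eigenvectorBasis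
  let M : E → Matrix (Fin n) (Fin n) ℝ := fun y =>
    LinearMap.toMatrixOrthonormal b (toEuclideanLin (A y))
  have hM (i j : Fin n) : HasFDerivAt (fun y => M y i j) (innerSL ℝ (b i) ∘L T.flip (b j)) x := by
    simp only [M, LinearMap.toMatrixOrthonormal_apply_apply,
      ← coe_toEuclideanCLM_eq_toEuclideanLin, ContinuousLinearMap.coe_coe]
    refine ((hasFDerivAt_const (b i) x).inner ℝ
      (hT.clm_apply (hasFDerivAt_const (b j) x))).congr_fderiv ?_
    ext w
    simp
  have hsigma : (fun y => sigmaMat (k + 1) (A y)) =ᶠ[𝓝 x]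
      fun y => sumPrincipalMinors (k + 1) (M y) := by
    filter_upwards [hA] with y hy
    rw [sigmaMat_eq_sumPrincipalMinors _ hy]
    exact sumPrincipalMinors_eq_of_charpoly_eq
      (charpoly_toMatrixOrthonormal_toEuclideanLin (A y) b).symm _
  exact (hasFDerivAt_sumPrincipalMinors_of_diagonal hM
    (toMatrixOrthonormal_eigenvectorBasis hA.self_of_nhds) k).congr_of_eventuallyEq hsigma

theorem hessian_apply (u : Euc n → ℝ) (x : Euc n) (i j : Fin n) :
    hessian u x i j = fderiv ℝ (fderiv ℝ u) x (EuclideanSpace.single i 1)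
      (EuclideanSpace.single j 1) := by
  simp [hessian, iteratedFDeriv_two_apply]

variable {k : ℕ} {u : Euc n → ℝ} {x : Euc n}

theorem isHermitian_hessian (hu : ContDiffAt ℝ 2 u x) : (hessian u x).IsHermitian := by
  ext i j
  rw [conjTranspose_apply, hessian_apply, hessian_apply, star_trivial]
  exact (hu.isSymmSndFDerivAt (by simp)).eq _ _

theorem toEuclideanCLM_hessian (hu : ContDiffAt ℝ 2 u x) :
    toEuclideanCLM (𝕜 := ℝ) (hessian u x) = fderiv ℝ (gradient u) x := by
  ext v i
  have hv : v = ∑ j, v j • EuclideanSpace.single j 1 := by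
    simpa using (EuclideanSpace.basisFun (Fin n) ℝ).sum_repr v |>.symm
  calc (hessian u x *ᵥ v) i
      = fderiv ℝ (fderiv ℝ u) x (EuclideanSpace.single i 1) v := by
        conv_rhs => rw [hv]
        simp [mulVec, dotProduct, hessian_apply, mul_comm]
    _ = ⟪fderiv ℝ (gradient u) x v, EuclideanSpace.single i 1⟫ := by
        rw [inner_fderiv_gradient hu, (hu.isSymmSndFDerivAt (by simp)).eq]
    _ = fderiv ℝ (gradient u) x v i := by simp [EuclideanSpace.inner_single_right]

theorem hasFDerivAt_sigmaMat_hessian (hu : ContDiffAt ℝ 3 u x) (hA : (hessian u x).IsHermitian)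
    (k : ℕ) :
    HasFDerivAt (fun y => sigmaMat (k + 1) (hessian u y))
      (∑ i, esymmErase k hA.eigenvalues i • (innerSL ℝ (hA.eigenvectorBasis i) ∘L
        (fderiv ℝ (fderiv ℝ (gradient u)) x).flip (hA.eigenvectorBasis i))) x := by
  have hC2 : ∀ᶠ y in 𝓝 x, ContDiffAt ℝ 2 u y :=
    (hu.eventually (by simp)).mono fun y hy => hy.of_le (by norm_num)
  have hT := hasFDerivAt_fderiv (contDiffAt_gradient hu (m := 2) (by norm_num))
  have hH := hT.congr_of_eventuallyEq (hC2.mono fun y hy => toEuclideanCLM_hessian hy)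
  exact hasFDerivAt_sigmaMat hH (hC2.mono fun y hy => isHermitian_hessian hy) k

theorem esymmVec_zero_right (hk : 1 ≤ k) : esymmVec k (0 : Fin n → ℝ) = 0 := by
  refine Finset.sum_eq_zero fun S hS => ?_
  have hcard : S.card ≠ 0 := by rw [(Finset.mem_powersetCard.mp hS).2]; omega
  simp [hcard]

theorem fderiv_sigmaMat_hessian_gradient_neg (hk : 1 ≤ k) (hu : ContDiffAt ℝ 3 u x)
    (hΓ : InGardingCone k (hessian u x)) (hmax : IsLocalMax (‖gradient u ·‖) x) :
    fderiv ℝ (fun y => sigmaMat k (hessian u y)) x (gradient u x) < 0 := by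
  obtain ⟨hA, hpos⟩ := hΓ
  obtain ⟨m, rfl⟩ := Nat.exists_eq_add_of_le' hk
  let lam := hA.eigenvalues
  let b := hA.eigenvectorBasis
  let T := fderiv ℝ (fderiv ℝ (gradient u)) x (gradient u x)
  have hF (i : Fin n) : 0 < esymmErase m lam i := by
    refine esymmErase_pos (fun j h1 hj => ?_) i
    rw [Finset.esymm_map_val]
    exact hpos j h1 hj
  have hbernstein (i : Fin n) : ⟪b i, T (b i)⟫ ≤ -lam i ^ 2 := by
    have hmax_i := norm_sq_fderiv_gradient_add_inner_nonpos_of_isLocalMax hu hmax (b i)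
    have hnorm : ‖fderiv ℝ (gradient u) x (b i)‖ ^ 2 = lam i ^ 2 := by
      rw [← toEuclideanCLM_hessian (hu.of_le (by norm_num)), toEuclideanCLM_eigenvectorBasis,
        norm_smul, b.orthonormal.1 i]
      simp [lam]
    linarith
  obtain ⟨i₀, hi₀⟩ : ∃ i, lam i ≠ 0 := by
    by_contra! hzero
    have hlam : hA.eigenvalues = 0 := funext hzero
    exact (hpos (m + 1) hk le_rfl).ne' (hlam ▸ esymmVec_zero_right hk)
  have hsum : 0 < ∑ i, esymmErase m lam i * lam i ^ 2 :=
    Finset.sum_pos' (fun i _ => mul_nonneg (hF i).le (sq_nonneg _))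
      ⟨i₀, Finset.mem_univ _, mul_pos (hF i₀) (sq_pos_of_ne_zero hi₀)⟩
  rw [(hasFDerivAt_sigmaMat_hessian hu hA m).fderiv]
  calc _ = ∑ i, esymmErase m lam i * ⟪b i, T (b i)⟫ := by
        simp [lam, b, T]
    _ ≤ ∑ i, esymmErase m lam i * (-lam i ^ 2) :=
        Finset.sum_le_sum fun i _ => mul_le_mul_of_nonneg_left (hbernstein i) (hF i).le
    _ < 0 := by
        simpa only [mul_neg, Finset.sum_neg_distrib, neg_lt_zero] using hsum

end Hessian

section Boundary

theorem exists_hasFDerivWithinAt_tendsto_fderiv {𝕜 E F : Type*} [NontriviallyNormedField 𝕜]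
    [NormedAddCommGroup E] [NormedSpace 𝕜 E] [NormedAddCommGroup F] [NormedSpace 𝕜 F]
    {u : E → F} {s : Set E} {z : E} (hu : ContDiffWithinAt 𝕜 1 u s z) (hz : z ∈ s) :
    ∃ L, HasFDerivWithinAt u L s z ∧ Tendsto (fderiv 𝕜 u) (𝓝[interior s] z) (𝓝 L) := by
  rw [← zero_add 1, contDiffWithinAt_succ_iff_hasFDerivWithinAt' (by simp)] at hu
  obtain ⟨U, hU, -, -, u', hu', hcont⟩ := hu
  rw [insert_eq_of_mem hz] at hU
  refine ⟨u' z, hu' z (mem_of_mem_nhdsWithin hz hU), ?_⟩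
  have htends : Tendsto u' (𝓝[interior s] z) (𝓝 (u' z)) :=
    hcont.continuousWithinAt.mono interior_subset
  refine htends.congr' ?_
  filter_upwards [nhdsWithin_mono z interior_subset hU, self_mem_nhdsWithin] with y hyU hy
  exact ((hu' y hyU).hasFDerivAt (mem_interior_iff_mem_nhds.mp hy)).fderiv.symm

theorem exists_continuousOn_closure_eq_fderivWithin {𝕜 E F : Type*} [NontriviallyNormedField 𝕜]
    [NormedAddCommGroup E] [NormedSpace 𝕜 E] [NormedAddCommGroup F] [NormedSpace 𝕜 F]
    {u : E → F} {Ω : Set E} (hΩ : IsOpen Ω) (hu : ContDiffOn 𝕜 1 u (closure Ω)) :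
    ∃ D : E → E →L[𝕜] F, ContinuousOn D (closure Ω) ∧ ∀ z ∈ closure Ω,
      UniqueDiffWithinAt 𝕜 (closure Ω) z → D z = fderivWithin 𝕜 u (closure Ω) z := by
  have hlim (z) (hz : z ∈ closure Ω) : ∃ L, HasFDerivWithinAt u L (closure Ω) z ∧
      Tendsto (fderiv 𝕜 u) (𝓝[Ω] z) (𝓝 L) := by
    obtain ⟨L, hL, htends⟩ := exists_hasFDerivWithinAt_tendsto_fderiv (hu z hz) hz
    exact ⟨L, hL, htends.mono_left (nhdsWithin_mono z hΩ.subset_interior_closure)⟩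
  refine ⟨extendFrom Ω (fderiv 𝕜 u), continuousOn_extendFrom subset_rfl fun z hz => ?_,
    fun z hz hunique => ?_⟩
  · obtain ⟨L, -, htends⟩ := hlim z hz
    exact ⟨L, htends⟩
  · obtain ⟨L, hL, htends⟩ := hlim z hz
    rw [hL.fderivWithin hunique]
    exact extendFrom_eq hz htends

variable {E F : Type*} [NormedAddCommGroup E] [NormedSpace ℝ E] [FiniteDimensional ℝ E]
  [NormedAddCommGroup F] [NormedSpace ℝ F] {Ω : Set E}

-- A boundary point nearest to a given point of `Ω` is touched by a ball contained in `Ω`.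
theorem frontier_subset_closure_uniqueDiffWithinAt (hΩ : IsOpen Ω) :
    frontier Ω ⊆ closure {y ∈ frontier Ω | UniqueDiffWithinAt ℝ (closure Ω) y} := by
  intro z hz
  have hzΩ : z ∉ Ω := (hΩ.frontier_eq ▸ hz).2
  refine Metric.mem_closure_iff.mpr fun ε hε => ?_
  obtain ⟨x, hx, hzx⟩ := Metric.mem_closure_iff.mp hz.1 (ε / 2) (by positivity)
  obtain ⟨y, hy, hxy⟩ := exists_mem_frontier_infDist_compl_eq_dist hx
    (ne_univ_iff_exists_notMem Ω |>.mpr ⟨z, hzΩ⟩)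
  have hyΩ : y ∉ Ω := hΩ.interior_eq ▸ hy.2
  have hr : 0 < dist x y := dist_pos.mpr fun h => hyΩ (h ▸ hx)
  have hball : ball x (dist x y) ⊆ Ω := hxy ▸ ball_infDist_compl_subset
  refine ⟨y, ⟨hy, ?_⟩, ?_⟩
  · have hyball : y ∈ closure (ball x (dist x y)) := by
      rw [closure_ball x hr.ne', mem_closedBall']
    refine (uniqueDiffWithinAt_convex (convex_ball x _) ?_ hyball).mono
      (hball.trans subset_closure)
    rw [isOpen_ball.interior_eq]
    exact nonempty_ball.mpr hr
  · have hxz : dist x y ≤ dist x z := hxy ▸ infDist_le_dist_of_mem hzΩ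
    linarith [dist_triangle z x y, dist_comm x z]

theorem le_on_closure_of_forall_not_isMaxOn {X : Type*} [PseudoMetricSpace X] [ProperSpace X]
    {f : X → ℝ} {Ω S : Set X} {C : ℝ} (hΩo : IsOpen Ω) (hΩb : IsBounded Ω)
    (hf : ContinuousOn f (closure Ω)) (hno : ∀ x ∈ Ω, ¬ IsMaxOn f Ω x)
    (hSΩ : S ⊆ closure Ω) (hS : frontier Ω ⊆ closure S) (hC : ∀ y ∈ S, f y ≤ C) :
    ∀ x ∈ closure Ω, f x ≤ C := by
  intro x hx
  obtain ⟨z, hz, hmax⟩ := hΩb.isCompact_closure.exists_isMaxOn ⟨x, hx⟩ hf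
  have hzΩ : z ∉ Ω := fun hzΩ => hno z hzΩ (hmax.on_subset subset_closure)
  have hzS : z ∈ closure S := hS (hΩo.frontier_eq ▸ ⟨hz, hzΩ⟩)
  calc f x ≤ f z := hmax hx
    _ ≤ C := ((hf z hz).mono hSΩ).closure_le hzS continuousWithinAt_const hC

theorem norm_fderiv_le_of_forall_frontier_le {u : E → F} {C : ℝ} (hΩo : IsOpen Ω)
    (hΩb : IsBounded Ω) (hu : ContDiffOn ℝ 1 u (closure Ω))
    (hno : ∀ x ∈ Ω, ¬ IsMaxOn (‖fderiv ℝ u ·‖) Ω x)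
    (hC : ∀ y ∈ frontier Ω, ‖fderivWithin ℝ u (closure Ω) y‖ ≤ C) {x : E} (hx : x ∈ Ω) :
    ‖fderiv ℝ u x‖ ≤ C := by
  obtain ⟨D, hDcont, hD⟩ := exists_continuousOn_closure_eq_fderivWithin hΩo hu
  have hDΩ {y : E} (hy : y ∈ Ω) : D y = fderiv ℝ u y := by
    have hnhds : closure Ω ∈ 𝓝 y := mem_of_superset (hΩo.mem_nhds hy) subset_closure
    rw [hD y (subset_closure hy) (uniqueDiffWithinAt_of_mem_nhds hnhds),
      fderivWithin_of_mem_nhds hnhds]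
  rw [← hDΩ hx]
  refine le_on_closure_of_forall_not_isMaxOn hΩo hΩb hDcont.norm (fun y hy hmax => ?_)
    (fun y hy => frontier_subset_closure hy.1) (frontier_subset_closure_uniqueDiffWithinAt hΩo)
    (fun y hy => ?_) x (subset_closure hx)
  · exact hno y hy fun w hw => by simpa only [mem_ofPred, hDΩ hw, hDΩ hy] using hmax hw
  · exact (hD y (frontier_subset_closure hy.1) hy.2).symm ▸ hC y hy.1

-- Where the derivative within `closure Ω` is not unique, `fderivWithin` is an arbitrary choice, so
-- it may be unbounded on `frontier Ω`; both suprema then have the junk value `0`.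
theorem sSup_norm_fderivWithin_closure_eq_frontier {u : E → F} (hΩo : IsOpen Ω)
    (hΩb : IsBounded Ω) (hu : ContDiffOn ℝ 1 u (closure Ω))
    (hno : ∀ x ∈ Ω, ¬ IsMaxOn (‖fderiv ℝ u ·‖) Ω x) :
    sSup ((fun x => ‖fderivWithin ℝ u (closure Ω) x‖) '' closure Ω) =
      sSup ((fun x => ‖fderivWithin ℝ u (closure Ω) x‖) '' frontier Ω) := by
  set N : E → ℝ := fun x => ‖fderivWithin ℝ u (closure Ω) x‖
  have hsub : N '' frontier Ω ⊆ N '' closure Ω := image_mono frontier_subset_closure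
  by_cases hbdd : BddAbove (N '' frontier Ω)
  · have hfrontier (y) (hy : y ∈ frontier Ω) : N y ≤ sSup (N '' frontier Ω) :=
      le_csSup hbdd (mem_image_of_mem N hy)
    have hclosure : ∀ w ∈ N '' closure Ω, w ≤ sSup (N '' frontier Ω) := by
      rintro _ ⟨x, hx, rfl⟩
      rw [closure_eq_self_union_frontier] at hx
      rcases hx with hx | hx
      · have hN : N x = ‖fderiv ℝ u x‖ := by
          simp only [N, fderivWithin_of_mem_nhds (mem_of_superset (hΩo.mem_nhds hx) subset_closure)]
        exact hN.trans_le (norm_fderiv_le_of_forall_frontier_le hΩo hΩb hu hno hfrontier hx)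
      · exact hfrontier x hx
    have hnonneg (s : Set E) : 0 ≤ sSup (N '' s) :=
      Real.sSup_nonneg (forall_mem_image.mpr fun x _ => norm_nonneg _)
    exact le_antisymm (Real.sSup_le hclosure (hnonneg _))
      (Real.sSup_le (fun w hw => le_csSup ⟨_, hclosure⟩ (hsub hw)) (hnonneg _))
  · rw [Real.sSup_of_not_bddAbove hbdd,
      Real.sSup_of_not_bddAbove fun h => hbdd (h.mono hsub)]

end Boundary

/-- This covers `σ_k(D²u) = f(u)` with `f` nondecreasing. -/
theorem statement5_general {n k : ℕ} (hk : 1 ≤ k)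
    (Ω : Set (Euc n)) (hΩo : IsOpen Ω) (hΩb : IsBounded Ω)
    (u : Euc n → ℝ) (hu3 : ContDiffOn ℝ 3 u Ω) (hu1 : ContDiffOn ℝ 1 u (closure Ω))
    (hconv : ∀ x ∈ Ω, InGardingCone k (hessian u x))
    (hmono : ∀ x ∈ Ω, 0 ≤ fderiv ℝ (fun y => sigmaMat k (hessian u y)) x (gradient u x)) :
    sSup ((fun x => ‖fderivWithin ℝ u (closure Ω) x‖) '' closure Ω) =
      sSup ((fun x => ‖fderivWithin ℝ u (closure Ω) x‖) '' frontier Ω) := by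
  refine sSup_norm_fderivWithin_closure_eq_frontier hΩo hΩb hu1 fun x hx hmax => ?_
  have hlocal : IsLocalMax (‖gradient u ·‖) x := by
    simpa only [gradient, LinearIsometryEquiv.norm_map] using hmax.isLocalMax (hΩo.mem_nhds hx)
  exact (hmono x hx).not_gt <| fderiv_sigmaMat_hessian_gradient_neg hk
    (hu3.contDiffAt (hΩo.mem_nhds hx)) (hconv x hx) hlocal

/-- the maximum of `|Du|` over `Ω̄` is attained on `∂Ω`. -/
theorem statement5 {n k : ℕ} (hk : 1 ≤ k) (hkn : k ≤ n)
    (Ω : Set (Euc n)) (hΩo : IsOpen Ω) (hΩb : IsBounded Ω)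
    (u : Euc n → ℝ) (hu3 : ContDiffOn ℝ 3 u Ω) (hu1 : ContDiffOn ℝ 1 u (closure Ω))
    (hconv : ∀ x ∈ Ω, InGardingCone k (hessian u x))
    (heq : ∀ x ∈ Ω, sigmaMat k (hessian u x) = 1) :
    sSup ((fun x => ‖fderivWithin ℝ u (closure Ω) x‖) '' closure Ω) =
      sSup ((fun x => ‖fderivWithin ℝ u (closure Ω) x‖) '' frontier Ω) :=
  statement5_general hk Ω hΩo hΩb u hu3 hu1 hconv fun x hx => by
    have hconst : (fun y => sigmaMat k (hessian u y)) =ᶠ[𝓝 x] fun _ => 1 :=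
      (hΩo.eventually_mem hx).mono heq
    simp [hconst.fderiv_eq]
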